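/- arXiv:1311.4859 — 4 statements merged into one kernel-verified Lean document; each statement's English description precedes it below -/
import Mathlib

section
/- For every integer k ≥ 6, a ring of k tetrahedra is independent in ℝ³, i.e., its generic 3-dimensional rank equals its number of edges 5k. -/
/-!
A ring of `k ≥ 6` tetrahedra is shown to have no nonzero equilibrium stress in one explicit
position, with all vertices on the twisted cubic `(t, t², t³)`. This makes the `5k` rigidity rows
linearly independent there, and the rank never exceeds the number of rows.

Consider an equilibrium stress, and let the wrench of a tetrahedron be the total Plücker vector in
`ℝ⁶` of the forces in the four bars joining its two hinges. Balance at both ends of a hinge says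
that consecutive tetrahedra have equal wrenches (`wrench_pred`), so that one wrench `F` is
transmitted all around the ring. The four bars of a tetrahedron all meet the line of its hinge, so
`F` is reciprocal to every hinge line (`wrench_reciprocal`).

The Plücker coordinates of the chord with parameters `s`, `t` of the twisted cubic are, up to the
factor `t - s`, the six monomials of degree at most two in `σ = s + t` and `π = s t`. Hence six
chords span `ℝ⁶` exactly when the points `(σ, π)` lie on no conic. The choice `s = x`, `t = -x²`
for `x = 1, …, 6` has this property, which forces `F = 0` (`wrench_eq_zero`). Four distinct points
of the twisted cubic are affinely independent (Vandermonde), so `F = 0` forces the stress on each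
bar to vanish (`coeff_eq_zero`), and then the stress on each hinge vanishes too.
-/

open SimpleGraph

variable {V : Type*}

/-- The rigidity row of an (ordered) pair of vertices at a framework `p`. -/
def rigidityRow [DecidableEq V] (p : V → Fin 3 → ℝ) (i j : V) : V → Fin 3 → ℝ :=
  fun k => if k = i then p i - p j else if k = j then p j - p i else 0

/-- The rank of the rigidity rows of `G` at `p`. -/
noncomputable def rankAt [DecidableEq V] (G : SimpleGraph V) (p : V → Fin 3 → ℝ) : ℕ :=
  Module.finrank ℝ (Submodule.span ℝ
    {w : V → Fin 3 → ℝ | ∃ i j, G.Adj i j ∧ w = rigidityRow p i j})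

/-- generic 3-dimensional rank of a graph. -/
noncomputable def genRank [DecidableEq V] (G : SimpleGraph V) : ℕ :=
  sSup {n : ℕ | ∃ p : V → Fin 3 → ℝ, n = rankAt G p}

noncomputable def numEdges (G : SimpleGraph V) : ℕ := G.edgeSet.ncard

def IsIndependent [DecidableEq V] (G : SimpleGraph V) : Prop := genRank G = numEdges G

def NucleationFree [DecidableEq V] (G : SimpleGraph V) : Prop :=
  ∀ S : Finset V, 5 ≤ S.card → genRank (G.induce (S : Set V)) ≠ 3 * S.card - 6

def addEdge (G : SimpleGraph V) (x y : V) : SimpleGraph V :=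
  G ⊔ SimpleGraph.fromEdgeSet {s(x, y)}

def IsImpliedNonEdge [DecidableEq V] (G : SimpleGraph V) (x y : V) : Prop :=
  x ≠ y ∧ ¬ G.Adj x y ∧ genRank (addEdge G x y) = genRank G

def ringOfTetrahedra (k : ℕ) : SimpleGraph (ZMod k × Fin 2) :=
  SimpleGraph.fromRel (fun x y => x.1 = y.1 ∨ y.1 = x.1 + 1)

/-! ### The special position -/

/-- Parameters on the twisted cubic of the two ends of the `i`-th hinge: with `x = i.val + 1`
they are `x` and `-x ^ 2`. -/
noncomputable def par (k : ℕ) (v : ZMod k × Fin 2) : ℝ :=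
  if v.2 = 0 then (v.1.val + 1 : ℝ) else -(v.1.val + 1 : ℝ) ^ 2

/-- The placement of the ring with all vertices on the twisted cubic `(t, t², t³)`. -/
noncomputable def place (k : ℕ) (v : ZMod k × Fin 2) : Fin 3 → ℝ :=
  fun m => par k v ^ (m.val + 1)

lemma par_injective (k : ℕ) [NeZero k] : Function.Injective (par k) := by
  rintro ⟨i, a⟩ ⟨j, b⟩ h
  have hi : (0 : ℝ) ≤ i.val := Nat.cast_nonneg _
  have hj : (0 : ℝ) ≤ j.val := Nat.cast_nonneg _
  have key : (i.val : ℝ) = j.val → i = j := fun h => ZMod.val_injective k (by exact_mod_cast h)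
  fin_cases a <;> fin_cases b <;> simp [par, -ZMod.natCast_val] at h ⊢
  · exact key (by exact_mod_cast h)
  · nlinarith
  · nlinarith
  · apply key
    nlinarith

/-! ### Edges of the ring -/

/-- One orientation of each edge of the ring: `Sum.inl i` indexes the `i`-th hinge, and
`Sum.inr (i, a, b)` the bar from end `a` of the hinge `i` to end `b` of the hinge `i + 1`. -/
def ringEdge (k : ℕ) :
    ZMod k ⊕ ZMod k × Fin 2 × Fin 2 → (ZMod k × Fin 2) × (ZMod k × Fin 2)
  | Sum.inl i => ((i, 0), (i, 1))
  | Sum.inr (i, a, b) => ((i, a), (i + 1, b))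

lemma ringEdge_ne (k : ℕ) (hk : 6 ≤ k) (t : ZMod k ⊕ ZMod k × Fin 2 × Fin 2) :
    (ringEdge k t).1 ≠ (ringEdge k t).2 := by
  have : Fact (1 < k) := ⟨by omega⟩
  rcases t with i | ⟨i, a, b⟩ <;> simp [ringEdge]

lemma ring_adj_iff (k : ℕ) (hk : 6 ≤ k) (x y : ZMod k × Fin 2) :
    (ringOfTetrahedra k).Adj x y ↔ ∃ t, ringEdge k t = (x, y) ∨ ringEdge k t = (y, x) := by
  constructor
  · obtain ⟨i, a⟩ := x
    obtain ⟨j, b⟩ := y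
    rintro ⟨hne, (h | h) | (h | h)⟩ <;> dsimp only at h <;> subst h
    · refine ⟨Sum.inl i, ?_⟩
      fin_cases a <;> fin_cases b <;> simp_all [ringEdge]
    · exact ⟨Sum.inr (i, a, b), Or.inl rfl⟩
    · refine ⟨Sum.inl j, ?_⟩
      fin_cases a <;> fin_cases b <;> simp_all [ringEdge]
    · exact ⟨Sum.inr (j, b, a), Or.inr rfl⟩
  · rintro ⟨t, h⟩
    have hne := ringEdge_ne k hk t
    have hrel : (ringEdge k t).1.1 = (ringEdge k t).2.1 ∨
        (ringEdge k t).2.1 = (ringEdge k t).1.1 + 1 := by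
      rcases t with i | ⟨i, a, b⟩ <;> simp [ringEdge]
    rcases h with h | h <;> rw [h] at hne hrel
    · exact ⟨hne, Or.inl hrel⟩
    · exact ⟨hne.symm, Or.inr hrel⟩

lemma rigidityRow_comm {V : Type*} [DecidableEq V] (p : V → Fin 3 → ℝ) (i j : V) :
    rigidityRow p i j = rigidityRow p j i := by
  funext v
  unfold rigidityRow
  split_ifs with h₁ h₂ <;> simp_all

lemma rigidityRow_apply {V : Type*} [DecidableEq V] (p : V → Fin 3 → ℝ) {i j : V} (h : i ≠ j)
    (v : V) (m : Fin 3) :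
    rigidityRow p i j v m =
      (if v = i then p i m - p j m else 0) + (if v = j then p j m - p i m else 0) := by
  unfold rigidityRow
  by_cases h₁ : v = i
  · subst h₁; simp [h]
  · by_cases h₂ : v = j
    · subst h₂; simp [h₁]
    · simp [h₁, h₂]

/-- The rows spanning the space in `rankAt` are those of the indexed edges. -/
lemma rows_eq_range (k : ℕ) (hk : 6 ≤ k) (p : ZMod k × Fin 2 → Fin 3 → ℝ) :
    {w | ∃ i j, (ringOfTetrahedra k).Adj i j ∧ w = rigidityRow p i j} =
      Set.range fun t => rigidityRow p (ringEdge k t).1 (ringEdge k t).2 := by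
  ext w
  constructor
  · rintro ⟨x, y, h, rfl⟩
    obtain ⟨t, ht | ht⟩ := (ring_adj_iff k hk x y).1 h
    · exact ⟨t, by simp [ht]⟩
    · exact ⟨t, by simp [ht, rigidityRow_comm p y x]⟩
  · rintro ⟨t, rfl⟩
    exact ⟨_, _, (ring_adj_iff k hk _ _).2 ⟨t, Or.inl rfl⟩, rfl⟩

lemma edgeSet_eq_range (k : ℕ) (hk : 6 ≤ k) :
    (ringOfTetrahedra k).edgeSet =
      Set.range fun t => s((ringEdge k t).1, (ringEdge k t).2) := by
  ext e
  induction e with | _ x y => ?_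
  rw [SimpleGraph.mem_edgeSet, ring_adj_iff k hk]
  simp [Prod.ext_iff]

/-! ### Equilibrium stresses in the special position -/

/-- Equilibrium of a stress `g` at the end `a` of the `j`-th hinge, which meets the hinge itself, two
bars towards the hinge `j + 1` and two towards `j - 1`; the other end of the hinge is `1 - a`.
For `m = 1, 2, 3` this is the coordinate `t ^ m` of the force balance. The exponent `m = 0`, where
every summand vanishes, is allowed so as to cover the lifted coordinates `(1, t, t², t³)`. -/
lemma equilibrium (k : ℕ) (hk : 6 ≤ k) [NeZero k] (g : ZMod k ⊕ ZMod k × Fin 2 × Fin 2 → ℝ)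
    (hg : ∑ t, g t • rigidityRow (place k) (ringEdge k t).1 (ringEdge k t).2 = 0)
    (j : ZMod k) (a : Fin 2) (m : ℕ) (hm : m ≤ 3) :
    g (Sum.inl j) * (par k (j, a) ^ m - par k (j, 1 - a) ^ m)
      + ∑ b, g (Sum.inr (j, a, b)) * (par k (j, a) ^ m - par k (j + 1, b) ^ m)
      + ∑ b, g (Sum.inr (j - 1, b, a)) * (par k (j, a) ^ m - par k (j - 1, b) ^ m) = 0 := by
  rcases Nat.eq_zero_or_pos m with rfl | hpos
  · simp
  obtain ⟨n, rfl⟩ : ∃ n : Fin 3, m = n.val + 1 := ⟨⟨m - 1, by omega⟩, by simp; omega⟩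
  have h := congrFun (congrFun hg (j, a)) n
  have hshift : ∀ i : ZMod k, (j = i + 1) ↔ (j - 1 = i) := fun i => by
    rw [sub_eq_iff_eq_add]
  simp only [Finset.sum_apply, Pi.smul_apply, smul_eq_mul, Pi.zero_apply,
    rigidityRow_apply _ (ringEdge_ne k hk _)] at h
  rw [Fintype.sum_sum_type, Fintype.sum_prod_type] at h
  simp only [Fintype.sum_prod_type, Fin.sum_univ_two, ringEdge, Prod.mk.injEq, hshift, ite_and,
    mul_add, Finset.sum_add_distrib, mul_ite, mul_zero, Finset.sum_ite_eq, Finset.mem_univ,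
    if_true, place] at h
  fin_cases a <;> simp at h ⊢ <;> linear_combination h

/-- The coordinate `(m, n)` of the wrench transmitted by the four bars between the hinges `i` and
`i + 1`: the stress-weighted sum of the Plücker coordinates of these bars, points being lifted to
`(1, t, t², t³)`. -/
noncomputable def wrench (k : ℕ) (w : ZMod k × Fin 2 × Fin 2 → ℝ) (i : ZMod k) (m n : ℕ) : ℝ :=
  ∑ a, ∑ b, w (i, a, b) *
    (par k (i, a) ^ m * par k (i + 1, b) ^ n - par k (i, a) ^ n * par k (i + 1, b) ^ m)

/-- Equilibrium of both ends of a hinge balances the wrenches on its two sides: the moments of the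
stress on the hinge itself cancel. -/
lemma wrench_pred (k : ℕ) (hk : 6 ≤ k) [NeZero k] (g : ZMod k ⊕ ZMod k × Fin 2 × Fin 2 → ℝ)
    (hg : ∑ t, g t • rigidityRow (place k) (ringEdge k t).1 (ringEdge k t).2 = 0)
    (j : ZMod k) (m n : ℕ) (hm : m ≤ 3) (hn : n ≤ 3) :
    wrench k (fun t => g (Sum.inr t)) j m n = wrench k (fun t => g (Sum.inr t)) (j - 1) m n := by
  have e0m := equilibrium k hk g hg j 0 m hm
  have e0n := equilibrium k hk g hg j 0 n hn
  have e1m := equilibrium k hk g hg j 1 m hm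
  have e1n := equilibrium k hk g hg j 1 n hn
  simp only [wrench, Fin.sum_univ_two, sub_add_cancel, sub_zero, sub_self] at *
  linear_combination par k (j, 0) ^ n * e0m - par k (j, 0) ^ m * e0n
    + par k (j, 1) ^ n * e1m - par k (j, 1) ^ m * e1n

lemma wrench_const (k : ℕ) (hk : 6 ≤ k) [NeZero k] (g : ZMod k ⊕ ZMod k × Fin 2 × Fin 2 → ℝ)
    (hg : ∑ t, g t • rigidityRow (place k) (ringEdge k t).1 (ringEdge k t).2 = 0)
    (i : ZMod k) (m n : ℕ) (hm : m ≤ 3) (hn : n ≤ 3) :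
    wrench k (fun t => g (Sum.inr t)) i m n = wrench k (fun t => g (Sum.inr t)) 0 m n := by
  have key : ∀ N : ℕ, wrench k (fun t => g (Sum.inr t)) (N : ZMod k) m n
      = wrench k (fun t => g (Sum.inr t)) 0 m n := by
    intro N
    induction N with
    | zero => simp
    | succ N ih =>
      rw [← ih, wrench_pred k hk g hg _ m n hm hn]
      simp
  simpa using key i.val

/-- Every bar from the hinge `i` to the hinge `i + 1` meets the line of the hinge `i`, so the
wrench of these bars is reciprocal to that line. -/
lemma wrench_reciprocal (k : ℕ) (w : ZMod k × Fin 2 × Fin 2 → ℝ) (i : ZMod k) (s t : ℝ)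
    (hs : par k (i, 0) = s) (ht : par k (i, 1) = t) :
    wrench k w i 0 1 * (s ^ 2 * t ^ 3 - s ^ 3 * t ^ 2)
      - wrench k w i 0 2 * (s * t ^ 3 - s ^ 3 * t)
      + wrench k w i 0 3 * (s * t ^ 2 - s ^ 2 * t)
      + wrench k w i 1 2 * (t ^ 3 - s ^ 3)
      - wrench k w i 1 3 * (t ^ 2 - s ^ 2)
      + wrench k w i 2 3 * (t - s) = 0 := by
  simp only [wrench, Fin.sum_univ_two, hs, ht]
  ring

/-- The transmitted wrench vanishes: it is reciprocal to the first six hinges, and their Plücker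
coordinates span `ℝ⁶`. -/
lemma wrench_eq_zero (k : ℕ) (hk : 6 ≤ k) [NeZero k] (g : ZMod k ⊕ ZMod k × Fin 2 × Fin 2 → ℝ)
    (hg : ∑ t, g t • rigidityRow (place k) (ringEdge k t).1 (ringEdge k t).2 = 0) (i : ZMod k) :
    wrench k (fun t => g (Sum.inr t)) i 0 1 = 0 ∧ wrench k (fun t => g (Sum.inr t)) i 0 2 = 0 ∧
    wrench k (fun t => g (Sum.inr t)) i 0 3 = 0 ∧ wrench k (fun t => g (Sum.inr t)) i 1 2 = 0 ∧
    wrench k (fun t => g (Sum.inr t)) i 1 3 = 0 ∧ wrench k (fun t => g (Sum.inr t)) i 2 3 = 0 := by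
  have hc := wrench_const k hk g hg
  have hrec := fun (N : ℕ) (hN : N < 6) =>
    wrench_reciprocal k (fun t => g (Sum.inr t)) (N : ZMod k) (N + 1 : ℝ) (-(N + 1 : ℝ) ^ 2)
      (by simp [par, -ZMod.natCast_val, ZMod.val_natCast, Nat.mod_eq_of_lt (show N < k by omega)])
      (by simp [par, -ZMod.natCast_val, ZMod.val_natCast, Nat.mod_eq_of_lt (show N < k by omega)])
  have r0 := hrec 0 (by norm_num)
  have r1 := hrec 1 (by norm_num)
  have r2 := hrec 2 (by norm_num)
  have r3 := hrec 3 (by norm_num)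
  have r4 := hrec 4 (by norm_num)
  have r5 := hrec 5 (by norm_num)
  clear hrec
  rw [hc _ 0 1 (by norm_num) (by norm_num), hc _ 0 2 (by norm_num) (by norm_num),
    hc _ 0 3 (by norm_num) (by norm_num), hc _ 1 2 (by norm_num) (by norm_num),
    hc _ 1 3 (by norm_num) (by norm_num), hc _ 2 3 (by norm_num) (by norm_num)]
    at r0 r1 r2 r3 r4 r5 ⊢
  norm_num at r0 r1 r2 r3 r4 r5
  refine ⟨?_, ?_, ?_, ?_, ?_, ?_⟩ <;> linarith

/-- A vanishing combination of the four lines joining `x₀`, `x₁` to `y₀`, `y₁` on the twisted cubic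
has vanishing first coefficient: pairing with the line `x₁ y₁`, which meets the other three lines,
leaves this coefficient times a Vandermonde determinant. -/
lemma coeff_eq_zero {x₀ x₁ y₀ y₁ : ℝ} (h₁ : x₀ ≠ x₁) (h₂ : x₀ ≠ y₀) (h₃ : x₀ ≠ y₁) (h₄ : x₁ ≠ y₀)
    (h₅ : x₁ ≠ y₁) (h₆ : y₀ ≠ y₁) (w₀₀ w₀₁ w₁₀ w₁₁ : ℝ) (F : ℕ → ℕ → ℝ)
    (hF : ∀ m n, F m n = w₀₀ * (x₀ ^ m * y₀ ^ n - x₀ ^ n * y₀ ^ m)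
      + w₀₁ * (x₀ ^ m * y₁ ^ n - x₀ ^ n * y₁ ^ m) + w₁₀ * (x₁ ^ m * y₀ ^ n - x₁ ^ n * y₀ ^ m)
      + w₁₁ * (x₁ ^ m * y₁ ^ n - x₁ ^ n * y₁ ^ m))
    (h01 : F 0 1 = 0) (h02 : F 0 2 = 0) (h03 : F 0 3 = 0) (h12 : F 1 2 = 0) (h13 : F 1 3 = 0)
    (h23 : F 2 3 = 0) : w₀₀ = 0 := by
  have hV : (x₀ - x₁) * (x₀ - y₀) * (x₀ - y₁) * (x₁ - y₀) * (x₁ - y₁) * (y₀ - y₁) ≠ 0 := by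
    simp only [mul_ne_zero_iff, sub_ne_zero]
    tauto
  refine (mul_eq_zero.1 (?_ : w₀₀ * _ = 0)).resolve_right hV
  rw [hF] at h01 h02 h03 h12 h13 h23
  linear_combination -(
    (x₁ ^ 2 * y₁ ^ 3 - x₁ ^ 3 * y₁ ^ 2) * h01 - (x₁ * y₁ ^ 3 - x₁ ^ 3 * y₁) * h02
    + (x₁ * y₁ ^ 2 - x₁ ^ 2 * y₁) * h03 + (y₁ ^ 3 - x₁ ^ 3) * h12
    - (y₁ ^ 2 - x₁ ^ 2) * h13 + (y₁ - x₁) * h23)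

lemma stress_eq_zero (k : ℕ) (hk : 6 ≤ k) [NeZero k]
    (g : ZMod k ⊕ ZMod k × Fin 2 × Fin 2 → ℝ)
    (hg : ∑ t, g t • rigidityRow (place k) (ringEdge k t).1 (ringEdge k t).2 = 0)
    (t : ZMod k ⊕ ZMod k × Fin 2 × Fin 2) : g t = 0 := by
  have : Fact (1 < k) := ⟨by omega⟩
  have hpar : ∀ u v : ZMod k × Fin 2, u ≠ v → par k u ≠ par k v :=
    fun u v h h' => h (par_injective k h')
  have hbar : ∀ i a b, g (Sum.inr (i, a, b)) = 0 := by
    intro i a b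
    obtain ⟨h01, h02, h03, h12, h13, h23⟩ := wrench_eq_zero k hk g hg i
    refine coeff_eq_zero (x₀ := par k (i, a)) (x₁ := par k (i, 1 - a)) (y₀ := par k (i + 1, b))
      (y₁ := par k (i + 1, 1 - b)) (hpar _ _ ?_) (hpar _ _ ?_) (hpar _ _ ?_) (hpar _ _ ?_)
      (hpar _ _ ?_) (hpar _ _ ?_) _ (g (Sum.inr (i, a, 1 - b))) (g (Sum.inr (i, 1 - a, b)))
      (g (Sum.inr (i, 1 - a, 1 - b))) (wrench k (fun t => g (Sum.inr t)) i) ?_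
      h01 h02 h03 h12 h13 h23
    · fin_cases a <;> simp
    · simp
    · simp
    · simp
    · simp
    · fin_cases b <;> simp
    · intro m n
      fin_cases a <;> fin_cases b <;> simp [wrench, Fin.sum_univ_two] <;> ring
  rcases t with i | ⟨i, a, b⟩
  · have h := equilibrium k hk g hg i 0 1 (by norm_num)
    simp only [hbar, zero_mul, Finset.sum_const_zero, add_zero, pow_one, sub_zero] at h
    exact (mul_eq_zero.1 h).resolve_right (sub_ne_zero.2 (hpar _ _ (by simp)))
  · exact hbar i a b

/-! ### Rank and number of edges -/

theorem ringOfTetrahedra_independent (k : ℕ) (hk : 6 ≤ k) :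
    genRank (ringOfTetrahedra k) = numEdges (ringOfTetrahedra k) ∧
      numEdges (ringOfTetrahedra k) = 5 * k := by
  have : NeZero k := ⟨by omega⟩
  have hli : LinearIndependent ℝ
      fun t => rigidityRow (place k) (ringEdge k t).1 (ringEdge k t).2 :=
    Fintype.linearIndependent_iff.2 fun g hg t => stress_eq_zero k hk g hg t
  have hcard : Fintype.card (ZMod k ⊕ ZMod k × Fin 2 × Fin 2) = 5 * k := by
    simp [ZMod.card]
    ring
  have hedges : numEdges (ringOfTetrahedra k) = 5 * k := by
    -- Distinct indices give distinct edges, since they give distinct rows.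
    have hinj : Function.Injective fun t => s((ringEdge k t).1, (ringEdge k t).2) := by
      intro t u h
      apply hli.injective
      rcases Sym2.eq_iff.1 h with ⟨h₁, h₂⟩ | ⟨h₁, h₂⟩
      · simp only [h₁, h₂]
      · simp only [h₁, h₂]
        exact rigidityRow_comm _ _ _
    rw [numEdges, edgeSet_eq_range k hk, Set.ncard_range_of_injective hinj,
      Nat.card_eq_fintype_card, hcard]
  refine ⟨?_, hedges⟩
  rw [hedges]
  refine IsGreatest.csSup_eq ⟨⟨place k, ?_⟩, ?_⟩
  · rw [rankAt, rows_eq_range k hk, finrank_span_eq_card hli, hcard]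
  · rintro n ⟨p, rfl⟩
    rw [rankAt, rows_eq_range k hk, ← hcard]
    exact finrank_range_le_card _
end

section
/- For every integer k ≥ 6, the ring of k roofs R_k is independent in ℝ³: rk₃(R_k) = 8k, its number of edges. -/
/-!
The ring is independent as soon as one framework admits no nonzero self-stress, since the rank is
at most the number of edges for every framework. The framework used here puts the `i`-th hinge on
the tangent of the curve `(t, t², t⁴)` at an integer parameter `t`, with a distinct `t` in `[0, k)`
for each hinge, and the apex `(i, 2)` at the midpoint of hinge `i`.

Distinct tangents at non-negative parameters are skew (`rr_det_ne`), so equilibrium at an apex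
kills the stress on its two edges to the preceding hinge, and the two other apex edges act together
like a bar along the hinge (`rr_apex`). What remains is a ring of nondegenerate tetrahedra. The
wrench (force and torque) transmitted through the four cross edges of a tetrahedron is the same all
around the ring, by equilibrium at the hinges. The cross edges from hinge `i` to hinge `i + 1` all
meet the line of hinge `i`, so this wrench does no work along any hinge line. The Plücker
coordinates of the tangent at `t` are nonzero multiples of `1, t, …, t⁵`, so any six tangents are
linearly independent, and for `k ≥ 6` the wrench vanishes (`rr_wrench`). Since the edge lines of a
nondegenerate tetrahedron are linearly independent, the stress on the cross edges vanishes, and then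
so does the stress along the hinges.
-/

open SimpleGraph

variable {V : Type*}

/-- The ring of `k` roofs: vertex `(i,0)` is the hinge vertex `aᵢ`, `(i,1)` is `bᵢ`,
and `(i,2)` is the apex `cᵢ` of the roof `Bᵢ` spanning the hinges `{aᵢ₋₁,bᵢ₋₁}` and
`{aᵢ,bᵢ}`. -/
def ringOfRoofs (k : ℕ) : SimpleGraph (ZMod k × Fin 3) :=
  SimpleGraph.fromRel (fun x y =>
    (y.1 = x.1 + 1 ∧ x.2 ≠ 2 ∧ y.2 ≠ 2) ∨
    (x.2 = 2 ∧ y.2 ≠ 2 ∧ (y.1 = x.1 ∨ y.1 + 1 = x.1)))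


/-! ### The edges and the framework -/

/-- The other endpoints of the eight edges starting at hinge `i`: for `e < 4` the edge joins
hinge vertices of the hinges `i` and `i + 1`; `e = 4, 5` join hinge `i` to the apex `(i, 2)`, and
`e = 6, 7` join it to the apex `(i + 1, 2)`. -/
def rrHead {k : ℕ} (e : ZMod k × Fin 8) : ZMod k × Fin 3 :=
  match e with
  | (i, 0) => (i + 1, 0)
  | (i, 1) => (i + 1, 1)
  | (i, 2) => (i + 1, 0)
  | (i, 3) => (i + 1, 1)
  | (i, 4) => (i, 2)
  | (i, 5) => (i, 2)
  | (i, 6) => (i + 1, 2)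
  | (i, 7) => (i + 1, 2)

/-- The endpoint at hinge `i` of the edge indexed by `(i, e)`. -/
def rrTail {k : ℕ} (e : ZMod k × Fin 8) : ZMod k × Fin 3 :=
  (e.1, ![0, 0, 1, 1, 0, 1, 0, 1] e.2)

/-- The curve `t ↦ (t, t², t⁴)`. -/
def rrCurve (t : ℝ) : Fin 3 → ℝ := ![t, t ^ 2, t ^ 4]

/-- The velocity of `rrCurve`. -/
def rrDir (t : ℝ) : Fin 3 → ℝ := ![1, 2 * t, 4 * t ^ 3]

/-- The framework: with `t` the representative of `i` in `[0, k)`, the hinge `i` lies on the tangent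
to the curve at `t`, symmetric about the point of tangency, where the apex `(i, 2)` sits. -/
def rrPos {k : ℕ} (x : ZMod k × Fin 3) : Fin 3 → ℝ :=
  rrCurve x.1.val + (![-1, 1, 0] x.2 : ℝ) • rrDir x.1.val

lemma rr_add_one_ne {k : ℕ} (hk : 6 ≤ k) (i : ZMod k) : i + 1 ≠ i := by
  have : Fact (1 < k) := ⟨by omega⟩
  simp

lemma rr_add_two_ne {k : ℕ} (hk : 6 ≤ k) (i : ZMod k) : i + 1 + 1 ≠ i := by
  intro h
  have h2 : ((2 : ℕ) : ZMod k) = 0 := by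
    push_cast
    linear_combination h
  rw [ZMod.natCast_eq_zero_iff] at h2
  have := Nat.le_of_dvd (by norm_num) h2
  omega

lemma rr_tail_ne_head {k : ℕ} (hk : 6 ≤ k) (e : ZMod k × Fin 8) : rrTail e ≠ rrHead e := by
  obtain ⟨i, e⟩ := e
  have : Fact (1 < k) := ⟨by omega⟩
  fin_cases e <;> simp [rrTail, rrHead]

lemma rr_adj {k : ℕ} (hk : 6 ≤ k) (x y : ZMod k × Fin 3) :
    (ringOfRoofs k).Adj x y ↔ ∃ e : ZMod k × Fin 8, s(rrTail e, rrHead e) = s(x, y) := by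
  constructor
  · have key : ∀ x y : ZMod k × Fin 3,
        ((y.1 = x.1 + 1 ∧ x.2 ≠ 2 ∧ y.2 ≠ 2) ∨
          (x.2 = 2 ∧ y.2 ≠ 2 ∧ (y.1 = x.1 ∨ y.1 + 1 = x.1))) →
        ∃ e : ZMod k × Fin 8, s(rrTail e, rrHead e) = s(x, y) := by
      rintro ⟨i, u⟩ ⟨j, v⟩ (⟨h1, h2, h3⟩ | ⟨h1, h2, h3 | h3⟩) <;> dsimp only at h1 h2 h3
      · subst h1
        fin_cases u <;> fin_cases v <;> simp at h2 h3
        · exact ⟨(i, 0), rfl⟩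
        · exact ⟨(i, 1), rfl⟩
        · exact ⟨(i, 2), rfl⟩
        · exact ⟨(i, 3), rfl⟩
      · subst h1 h3
        fin_cases v <;> simp at h2
        · exact ⟨(j, 4), Sym2.eq_swap⟩
        · exact ⟨(j, 5), Sym2.eq_swap⟩
      · subst h1 h3
        fin_cases v <;> simp at h2
        · exact ⟨(j, 6), Sym2.eq_swap⟩
        · exact ⟨(j, 7), Sym2.eq_swap⟩
    rintro ⟨-, h | h⟩
    · exact key x y h
    · rw [Sym2.eq_swap]
      exact key y x h
  · rintro ⟨e, he⟩
    have hadj : (ringOfRoofs k).Adj (rrTail e) (rrHead e) := by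
      refine ⟨rr_tail_ne_head hk e, ?_⟩
      obtain ⟨i, e⟩ := e
      fin_cases e <;> simp [rrTail, rrHead]
    rcases Sym2.eq_iff.1 he with ⟨h1, h2⟩ | ⟨h1, h2⟩
    · rwa [h1, h2] at hadj
    · rw [h1, h2] at hadj
      exact hadj.symm

lemma rr_inj {k : ℕ} (hk : 6 ≤ k) :
    Function.Injective (fun e : ZMod k × Fin 8 => s(rrTail e, rrHead e)) := by
  rintro ⟨i, e⟩ ⟨j, f⟩ h
  have h1 := rr_add_one_ne hk i
  have h2 := rr_add_two_ne hk i
  have h1' := rr_add_one_ne hk j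
  have h2' := rr_add_two_ne hk j
  fin_cases e <;> fin_cases f <;> simp [rrTail, rrHead] at h ⊢ <;> grind

lemma rr_edges {k : ℕ} (hk : 6 ≤ k) : numEdges (ringOfRoofs k) = 8 * k := by
  have : NeZero k := ⟨by omega⟩
  have h : (ringOfRoofs k).edgeSet =
      Set.range (fun e : ZMod k × Fin 8 => s(rrTail e, rrHead e)) := by
    ext z
    induction z with
    | _ x y => rw [SimpleGraph.mem_edgeSet, rr_adj hk]; rfl
  rw [numEdges, h, ← Set.image_univ, Set.ncard_image_of_injective _ (rr_inj hk),
    Set.ncard_univ, Nat.card_prod, Nat.card_zmod, Nat.card_fin, mul_comm]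

lemma rr_row_comm {W : Type*} [DecidableEq W] (p : W → Fin 3 → ℝ) (x y : W) :
    rigidityRow p x y = rigidityRow p y x := by
  funext z
  by_cases hx : z = x <;> by_cases hy : z = y <;> simp_all [rigidityRow]

lemma rr_rankAt {k : ℕ} (hk : 6 ≤ k) (p : ZMod k × Fin 3 → Fin 3 → ℝ) :
    rankAt (ringOfRoofs k) p = Module.finrank ℝ (Submodule.span ℝ
      (Set.range fun e : ZMod k × Fin 8 => rigidityRow p (rrTail e) (rrHead e))) := by
  rw [rankAt]
  refine congrArg (fun S => Module.finrank ℝ (Submodule.span ℝ S)) ?_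
  ext w
  constructor
  · rintro ⟨x, y, h, rfl⟩
    obtain ⟨e, he⟩ := (rr_adj hk x y).1 h
    refine ⟨e, ?_⟩
    rcases Sym2.eq_iff.1 he with ⟨h1, h2⟩ | ⟨h1, h2⟩
    · simp only [h1, h2]
    · simp only [h1, h2]
      exact rr_row_comm p y x
  · rintro ⟨e, rfl⟩
    exact ⟨_, _, (rr_adj hk _ _).2 ⟨e, rfl⟩, rfl⟩

/-! ### Geometry of the tangents -/

/-- Tangents of the curve at distinct non-negative parameters are skew: the determinant of the two
directions and the chord is `2 (s - t)⁴ (s + t)`. -/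
lemma rr_det_ne {s t : ℝ} (hs : 0 ≤ s) (ht : 0 ≤ t) (h : s ≠ t) :
    2 * (s - t) ^ 4 * (s + t) ≠ 0 := by
  have h1 : s + t ≠ 0 := by
    intro h0
    apply h
    linarith
  have h2 := sub_ne_zero.2 h
  positivity

/-- Directions of two skew tangents and the chord joining their points of tangency are linearly
independent. -/
lemma rr_apex {s t α β γ : ℝ} (hD : 2 * (s - t) ^ 4 * (s + t) ≠ 0)
    (h : ∀ c, α * rrDir t c + β * rrDir s c + γ * (rrCurve t c - rrCurve s c) = 0) :
    α = 0 ∧ β = 0 ∧ γ = 0 := by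
  have e0 := h 0
  have e1 := h 1
  have e2 := h 2
  simp [rrDir, rrCurve] at e0 e1 e2
  refine ⟨?_, ?_, ?_⟩
  · apply (mul_eq_zero.1 (?_ : α * _ = 0)).resolve_right hD
    linear_combination (2 * s * (t ^ 4 - s ^ 4) - 4 * s ^ 3 * (t ^ 2 - s ^ 2)) * e0 +
      (4 * s ^ 3 * (t - s) - (t ^ 4 - s ^ 4)) * e1 + ((t ^ 2 - s ^ 2) - 2 * s * (t - s)) * e2
  · apply (mul_eq_zero.1 (?_ : β * _ = 0)).resolve_right hD
    linear_combination (-(2 * t * (t ^ 4 - s ^ 4)) + 4 * t ^ 3 * (t ^ 2 - s ^ 2)) * e0 +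
      (-(4 * t ^ 3 * (t - s)) + (t ^ 4 - s ^ 4)) * e1 + (-(t ^ 2 - s ^ 2) + 2 * t * (t - s)) * e2
  · apply (mul_eq_zero.1 (?_ : γ * _ = 0)).resolve_right hD
    linear_combination (2 * t * 4 * s ^ 3 - 4 * t ^ 3 * 2 * s) * e0 +
      (4 * t ^ 3 - 4 * s ^ 3) * e1 + (2 * s - 2 * t) * e2

/-- A force `F` and a torque `M` that do no work along six or more tangents of the curve vanish:
the Plücker coordinates of the tangent at `t` are constant multiples of `1, t, …, t⁵`. -/
lemma rr_wrench {k : ℕ} (hk : 6 ≤ k) {F0 F1 F2 M0 M1 M2 : ℝ}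
    (h : ∀ n < k, ∀ t : ℝ, t = n → F0 * (2 * t ^ 5) + F1 * (-3 * t ^ 4) + F2 * t ^ 2 +
      M0 + M1 * (2 * t) + M2 * (4 * t ^ 3) = 0) :
    F0 = 0 ∧ F1 = 0 ∧ F2 = 0 ∧ M0 = 0 ∧ M1 = 0 ∧ M2 = 0 := by
  have h0 := h 0 (by omega) 0 (by norm_num)
  have h1 := h 1 (by omega) 1 (by norm_num)
  have h2 := h 2 (by omega) 2 (by norm_num)
  have h3 := h 3 (by omega) 3 (by norm_num)
  have h4 := h 4 (by omega) 4 (by norm_num)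
  have h5 := h 5 (by omega) 5 (by norm_num)
  norm_num at h0 h1 h2 h3 h4 h5
  refine ⟨?_, ?_, ?_, ?_, ?_, ?_⟩ <;> linarith

/-! ### Absence of self-stress -/

/-- The `c`-th coordinate of the force transmitted through the cross edges from hinge `i` to hinge
`i + 1` under the stress `g`. -/
def rrForce {k : ℕ} (g : ZMod k × Fin 8 → ℝ) (i : ZMod k) (c : Fin 3) : ℝ :=
  g (i, 0) * (rrPos (i, 0) c - rrPos (i + 1, 0) c) +
  g (i, 1) * (rrPos (i, 0) c - rrPos (i + 1, 1) c) +
  g (i, 2) * (rrPos (i, 1) c - rrPos (i + 1, 0) c) +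
  g (i, 3) * (rrPos (i, 1) c - rrPos (i + 1, 1) c)

/-- The torque counterpart of `rrForce`: the coordinate of the total moment about the origin in the
plane of the coordinates `c` and `c'`. -/
def rrTorque {k : ℕ} (g : ZMod k × Fin 8 → ℝ) (i : ZMod k) (c c' : Fin 3) : ℝ :=
  g (i, 0) * (rrPos (i + 1, 0) c * rrPos (i, 0) c' - rrPos (i + 1, 0) c' * rrPos (i, 0) c) +
  g (i, 1) * (rrPos (i + 1, 1) c * rrPos (i, 0) c' - rrPos (i + 1, 1) c' * rrPos (i, 0) c) +
  g (i, 2) * (rrPos (i + 1, 0) c * rrPos (i, 1) c' - rrPos (i + 1, 0) c' * rrPos (i, 1) c) +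
  g (i, 3) * (rrPos (i + 1, 1) c * rrPos (i, 1) c' - rrPos (i + 1, 1) c' * rrPos (i, 1) c)

/-- A self-stress satisfies the equilibrium equation at each vertex. The equations at the apex
`(i, 2)` and at the two hinge vertices of `i` are listed in this order. -/
lemma rr_equilibrium {k : ℕ} (hk : 6 ≤ k) [NeZero k] (p : ZMod k × Fin 3 → Fin 3 → ℝ)
    (g : ZMod k × Fin 8 → ℝ)
    (hg : ∑ e, g e • rigidityRow p (rrTail e) (rrHead e) = 0) (j : ZMod k) (c : Fin 3) :
    (g (j + 1, 4) * (p (j + 1, 2) c - p (j + 1, 0) c) +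
      g (j + 1, 5) * (p (j + 1, 2) c - p (j + 1, 1) c) +
      g (j, 6) * (p (j + 1, 2) c - p (j, 0) c) + g (j, 7) * (p (j + 1, 2) c - p (j, 1) c) = 0) ∧
    (g (j + 1, 0) * (p (j + 1, 0) c - p (j + 1 + 1, 0) c) +
      g (j + 1, 1) * (p (j + 1, 0) c - p (j + 1 + 1, 1) c) +
      g (j, 0) * (p (j + 1, 0) c - p (j, 0) c) + g (j, 2) * (p (j + 1, 0) c - p (j, 1) c) +
      g (j + 1, 4) * (p (j + 1, 0) c - p (j + 1, 2) c) +
      g (j + 1, 6) * (p (j + 1, 0) c - p (j + 1 + 1, 2) c) = 0) ∧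
    (g (j + 1, 2) * (p (j + 1, 1) c - p (j + 1 + 1, 0) c) +
      g (j + 1, 3) * (p (j + 1, 1) c - p (j + 1 + 1, 1) c) +
      g (j, 1) * (p (j + 1, 1) c - p (j, 0) c) + g (j, 3) * (p (j + 1, 1) c - p (j, 1) c) +
      g (j + 1, 5) * (p (j + 1, 1) c - p (j + 1, 2) c) +
      g (j + 1, 7) * (p (j + 1, 1) c - p (j + 1 + 1, 2) c) = 0) := by
  have hrow : ∀ (e : ZMod k × Fin 8) (x : ZMod k × Fin 3),
      rigidityRow p (rrTail e) (rrHead e) x c =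
      (if x = rrTail e then p (rrTail e) c - p (rrHead e) c else 0) +
      (if x = rrHead e then p (rrHead e) c - p (rrTail e) c else 0) := by
    intro e x
    have := rr_tail_ne_head hk e
    by_cases h1 : x = rrTail e
    · have h2 : x ≠ rrHead e := fun h => this (h1.symm.trans h)
      simp [rigidityRow, h1, this]
    · by_cases h2 : x = rrHead e <;> simp [rigidityRow, h1, h2, this.symm]
  have hx : ∀ x : ZMod k × Fin 3, ∑ i : ZMod k, ∑ e : Fin 8, g (i, e) *
      ((if x = rrTail (i, e) then p (rrTail (i, e)) c - p (rrHead (i, e)) c else 0) +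
      (if x = rrHead (i, e) then p (rrHead (i, e)) c - p (rrTail (i, e)) c else 0)) = 0 := by
    intro x
    have := congrFun (congrFun hg x) c
    simpa only [Finset.sum_apply, Pi.smul_apply, smul_eq_mul, Pi.zero_apply, hrow,
      Fintype.sum_prod_type] using this
  refine ⟨?_, ?_, ?_⟩
  · have := hx (j + 1, 2)
    simp [Fin.sum_univ_eight, rrTail, rrHead, Prod.ext_iff, mul_add, Finset.sum_add_distrib] at this
    linear_combination this
  · have := hx (j + 1, 0)
    simp [Fin.sum_univ_eight, rrTail, rrHead, Prod.ext_iff, mul_add, Finset.sum_add_distrib] at this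
    linear_combination this
  · have := hx (j + 1, 1)
    simp [Fin.sum_univ_eight, rrTail, rrHead, Prod.ext_iff, mul_add, Finset.sum_add_distrib] at this
    linear_combination this

lemma rr_const {k : ℕ} (hk : 6 ≤ k) {f : ZMod k → ℝ} (h : ∀ i, f (i + 1) = f i) (i : ZMod k) :
    f i = f 0 := by
  have : NeZero k := ⟨by omega⟩
  have hn : ∀ n : ℕ, f n = f 0 := by
    intro n
    induction n with
    | zero => simp
    | succ n ih => rw [Nat.cast_succ, h, ih]
  simpa using hn i.val

lemma rr_linearIndependent {k : ℕ} (hk : 6 ≤ k) [NeZero k] :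
    LinearIndependent ℝ (fun e : ZMod k × Fin 8 =>
      rigidityRow (rrPos (k := k)) (rrTail e) (rrHead e)) := by
  rw [Fintype.linearIndependent_iff]
  intro g hg
  have eq := rr_equilibrium hk rrPos g hg
  have hD : ∀ j : ZMod k, 2 * ((j.val : ℝ) - (j + 1).val) ^ 4 * (j.val + (j + 1).val) ≠ 0 := by
    intro j
    refine rr_det_ne (by positivity) (by positivity) ?_
    intro h
    exact rr_add_one_ne hk j (ZMod.val_injective k (by exact_mod_cast h)).symm
  -- The two edges at an apex that leave its own hinge carry no stress; the other two balance.
  have hA : ∀ j : ZMod k, g (j, 6) = 0 ∧ g (j, 7) = 0 ∧ g (j + 1, 4) = g (j + 1, 5) := by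
    intro j
    obtain ⟨h1, h2, h3⟩ := rr_apex (hD j) (α := g (j + 1, 4) - g (j + 1, 5))
      (β := g (j, 6) - g (j, 7)) (γ := g (j, 6) + g (j, 7)) (fun c => by
        have := (eq j c).1
        simp [rrPos, -ZMod.natCast_val] at this
        linear_combination this)
    exact ⟨by linarith, by linarith, by linarith⟩
  have hF : ∀ c j, rrForce g (j + 1) c = rrForce g j c := by
    intro c j
    obtain ⟨h1, h2, h3⟩ := eq j c
    obtain ⟨h6, h7, h4⟩ := hA j
    obtain ⟨h6', h7', -⟩ := hA (j + 1)
    simp only [h6', h7', h4, h6, h7] at h1 h2 h3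
    unfold rrForce
    linear_combination h1 + h2 + h3
  have hM : ∀ c c' j, rrTorque g (j + 1) c c' = rrTorque g j c c' := by
    intro c c' j
    obtain ⟨-, h2, h3⟩ := eq j c
    obtain ⟨-, h2', h3'⟩ := eq j c'
    obtain ⟨-, -, h4⟩ := hA j
    obtain ⟨h6', h7', -⟩ := hA (j + 1)
    have hc : ∀ c, rrPos (j + 1, 2) c = (rrPos (j + 1, 0) c + rrPos (j + 1, 1) c) / 2 := by
      intro c
      simp [rrPos, -ZMod.natCast_val]
      ring
    simp only [h6', h7', h4, hc] at h2 h3 h2' h3'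
    unfold rrTorque
    linear_combination rrPos (j + 1, 0) c * h2' - rrPos (j + 1, 0) c' * h2 +
      rrPos (j + 1, 1) c * h3' - rrPos (j + 1, 1) c' * h3
  -- The cross edges at hinge `i` all meet the line of that hinge.
  have hW : ∀ i : ZMod k, ∀ t : ℝ, t = i.val →
      rrForce g i 0 * (2 * t ^ 5) + rrForce g i 1 * (-3 * t ^ 4) + rrForce g i 2 * t ^ 2 +
      rrTorque g i 1 2 + rrTorque g i 2 0 * (2 * t) + rrTorque g i 0 1 * (4 * t ^ 3) = 0 := by
    rintro i t rfl
    simp [rrForce, rrTorque, rrPos, rrCurve, rrDir]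
    ring
  have hF0 : ∀ c i, rrForce g i c = rrForce g 0 c := fun c i =>
    rr_const hk (f := fun i => rrForce g i c) (hF c) i
  have hM0 : ∀ c c' i, rrTorque g i c c' = rrTorque g 0 c c' := fun c c' i =>
    rr_const hk (f := fun i => rrTorque g i c c') (hM c c') i
  obtain ⟨F0, F1, F2, M0, M1, M2⟩ := rr_wrench hk
    (F0 := rrForce g 0 0) (F1 := rrForce g 0 1) (F2 := rrForce g 0 2)
    (M0 := rrTorque g 0 1 2) (M1 := rrTorque g 0 2 0) (M2 := rrTorque g 0 0 1) (by
      intro n hn t ht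
      have := hW (n : ZMod k) t (by rw [ht, ZMod.val_natCast_of_lt hn])
      simpa only [hF0, hM0] using this)
  -- The moment of the wrench about an edge of the tetrahedron sees only the opposite edge.
  have hX : ∀ j : ZMod k, g (j, 0) = 0 ∧ g (j, 1) = 0 ∧ g (j, 2) = 0 ∧ g (j, 3) = 0 := by
    intro j
    have f0 := (hF0 0 j).trans F0
    have f1 := (hF0 1 j).trans F1
    have f2 := (hF0 2 j).trans F2
    have m0 := (hM0 1 2 j).trans M0
    have m1 := (hM0 2 0 j).trans M1
    have m2 := (hM0 0 1 j).trans M2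
    have hvol := hD j
    have hopp : ∀ q r : Fin 3 → ℝ,
        (q 1 * r 2 - q 2 * r 1) * rrForce g j 0 + (q 2 * r 0 - q 0 * r 2) * rrForce g j 1 +
        (q 0 * r 1 - q 1 * r 0) * rrForce g j 2 + (r 0 - q 0) * rrTorque g j 1 2 +
        (r 1 - q 1) * rrTorque g j 2 0 + (r 2 - q 2) * rrTorque g j 0 1 = 0 := by
      intro q r
      rw [f0, f1, f2, m0, m1, m2]
      ring
    have o0 := hopp (rrPos (j, 1)) (rrPos (j + 1, 1))
    have o1 := hopp (rrPos (j, 1)) (rrPos (j + 1, 0))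
    have o2 := hopp (rrPos (j, 0)) (rrPos (j + 1, 1))
    have o3 := hopp (rrPos (j, 0)) (rrPos (j + 1, 0))
    simp [rrForce, rrTorque, rrPos, rrCurve, rrDir, -ZMod.natCast_val] at o0 o1 o2 o3
    generalize (j.val : ℝ) = s at *
    generalize ((j + 1).val : ℝ) = t at *
    refine ⟨?_, ?_, ?_, ?_⟩ <;> refine (mul_eq_zero.1 ?_).resolve_right hvol
    · linear_combination o0 / 4
    · linear_combination -o1 / 4
    · linear_combination -o2 / 4
    · linear_combination o3 / 4
  have hH : ∀ j : ZMod k, g (j + 1, 4) = 0 := by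
    intro j
    have := (eq j 0).2.1
    obtain ⟨h6, h7, h4⟩ := hA j
    obtain ⟨h6', h7', -⟩ := hA (j + 1)
    obtain ⟨a, b, c, d⟩ := hX j
    obtain ⟨a', b', c', d'⟩ := hX (j + 1)
    simp [a, c, a', b', h6', rrPos, rrDir] at this
    exact this
  rintro ⟨i, e⟩
  have hi : i - 1 + 1 = i := sub_add_cancel i 1
  have h4 := hH (i - 1)
  have h5 := (hA (i - 1)).2.2
  rw [hi] at h4 h5
  obtain ⟨h6, h7, -⟩ := hA i
  obtain ⟨h0, h1, h2, h3⟩ := hX i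
  fin_cases e
  exacts [h0, h1, h2, h3, h4, h5 ▸ h4, h6, h7]

theorem ringOfRoofs_independent (k : ℕ) (hk : 6 ≤ k) :
    genRank (ringOfRoofs k) = numEdges (ringOfRoofs k) ∧
      numEdges (ringOfRoofs k) = 8 * k := by
  have : NeZero k := ⟨by omega⟩
  refine ⟨?_, rr_edges hk⟩
  have hcard : Fintype.card (ZMod k × Fin 8) = 8 * k := by
    rw [Fintype.card_prod, ZMod.card, Fintype.card_fin, mul_comm]
  rw [rr_edges hk, genRank]
  refine IsGreatest.csSup_eq ⟨⟨rrPos, ?_⟩, ?_⟩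
  · rw [rr_rankAt hk, finrank_span_eq_card (rr_linearIndependent hk), hcard]
  · rintro n ⟨p, rfl⟩
    rw [rr_rankAt hk, ← hcard]
    exact finrank_range_le_card _
end

section
/- The ring of six roofs R₆ is minimally rigid (isostatic) in ℝ³: it is independent in ℝ³ and rk₃(R₆) = 48 = 3·18 − 6, so R₆ is rigid. -/
/-!
The graph `R₆` has exactly 48 edges, so its rank is at most 48 at every framework, and it suffices
to exhibit one framework at which the 48 rigidity rows are independent.

Let `T (x, y, z) = (-y, -z, -x)`, a rotary reflection of order six with `T³ = -1`. The framework
`place` puts the vertices `(i, 0), (i, 1), (i, 2)` at the images under `Tⁱ` of `(0, 0, 1)`,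
`(1, 0, 1)`, `(-1, -1, -1)`. By symmetry, the equilibrium equations of a stress `g` have the same
shape at every hinge once written in the frame rotated by `T⁻ⁱ`. A stress is shown to vanish in
two stages (`eq_zero_of_equilibrium`).

* Each roof is balanced and so is each hinge vertex, so the wrench (force `F`, torque `M`)
  transmitted from a roof to the next one is the same all around the ring. Forces applied at the
  two points of a hinge exert no torque about the hinge line, which in the frame of the hinge reads
  `M_x + F_y = 0`. Three steps around the ring `F_y` changes sign and `M_x` does not, so both
  vanish; by rotating, the entire wrench vanishes.
* A roof exerting zero wrench on its hinges pulls the ends of each hinge along the hinge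
  line. It follows that its stress is a multiple `s` of one fixed vector (the self-stress of `K₅`
  restricted to the roof), and the balance of the next hinge forces the next multiple to be `2 s`.
  Going once around gives `s = 64 s`, so `s = 0`.
-/

open SimpleGraph

variable {V : Type*}

namespace RingSix

/-! ### The edges of the ring -/

/-- First endpoints of an enumeration of the 48 edges. The pairs `(i, 0), …, (i, 7)` list the edges
of the roof between the hinges `i` and `i + 1`: four edges joining the two hinges, then two from the
apex `(i + 1, 2)` to the hinge `i`, then two from the apex to the hinge `i + 1`. -/
def src (e : ZMod 6 × Fin 8) : ZMod 6 × Fin 3 :=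
  (![e.1, e.1, e.1, e.1, e.1 + 1, e.1 + 1, e.1 + 1, e.1 + 1] e.2, ![0, 0, 1, 1, 2, 2, 2, 2] e.2)

/-- Second endpoints of the enumeration of the edges described at `src`. -/
def tgt (e : ZMod 6 × Fin 8) : ZMod 6 × Fin 3 :=
  (![e.1 + 1, e.1 + 1, e.1 + 1, e.1 + 1, e.1, e.1, e.1 + 1, e.1 + 1] e.2,
    ![0, 1, 0, 1, 0, 1, 0, 1] e.2)

/-- The enumeration of the edges of the ring of six roofs. -/
def edge (e : ZMod 6 × Fin 8) : Sym2 (ZMod 6 × Fin 3) := s(src e, tgt e)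

lemma edge_injective : Function.Injective edge := by
  unfold Function.Injective; decide +kernel

lemma adj_iff (x y : ZMod 6 × Fin 3) :
    (ringOfRoofs 6).Adj x y ↔ ∃ e, s(x, y) = edge e := by
  rw [ringOfRoofs, SimpleGraph.fromRel_adj]
  revert x y
  decide +kernel

lemma edgeSet_eq : (ringOfRoofs 6).edgeSet = Set.range edge := by
  ext z
  induction z with
  | _ x y => simp [adj_iff, eq_comm]

lemma numEdges_eq : numEdges (ringOfRoofs 6) = 48 := by
  rw [numEdges, edgeSet_eq, ← Set.image_univ, Set.ncard_image_of_injective _ edge_injective,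
    Set.ncard_univ, Nat.card_eq_fintype_card]
  rfl

/-! ### Rank as the rank of a family of 48 rows -/

/-- A form of the rigidity row that is additive in the two endpoints, so that sums of rows can be
evaluated termwise. It needs no hypothesis `i ≠ j`, as both sides vanish for `i = j`. -/
lemma rigidityRow_apply {V : Type*} [DecidableEq V] (p : V → Fin 3 → ℝ) (i j k : V) :
    rigidityRow p i j k = (if k = i then p i - p j else 0) + (if k = j then p j - p i else 0) := by
  unfold rigidityRow
  by_cases h1 : k = i <;> by_cases h2 : k = j <;> simp [h1, h2]
  · subst h1; subst h2; simp
  all_goals grind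

lemma rigidityRow_comm {V : Type*} [DecidableEq V] (p : V → Fin 3 → ℝ) (i j : V) :
    rigidityRow p i j = rigidityRow p j i := by
  funext k
  rw [rigidityRow_apply, rigidityRow_apply, add_comm]

/-- The rigidity rows at `p`, indexed by the enumeration of the edges. -/
def rows (p : ZMod 6 × Fin 3 → Fin 3 → ℝ) (e : ZMod 6 × Fin 8) : ZMod 6 × Fin 3 → Fin 3 → ℝ :=
  rigidityRow p (src e) (tgt e)

lemma rankAt_eq (p : ZMod 6 × Fin 3 → Fin 3 → ℝ) :
    rankAt (ringOfRoofs 6) p = Module.finrank ℝ (Submodule.span ℝ (Set.range (rows p))) := by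
  have : {w | ∃ i j, (ringOfRoofs 6).Adj i j ∧ w = rigidityRow p i j} = Set.range (rows p) := by
    ext w
    constructor
    · rintro ⟨i, j, h, rfl⟩
      obtain ⟨e, he⟩ := (adj_iff i j).1 h
      rcases Sym2.eq_iff.1 he with ⟨rfl, rfl⟩ | ⟨rfl, rfl⟩
      · exact ⟨e, rfl⟩
      · exact ⟨e, rigidityRow_comm _ _ _⟩
    · rintro ⟨e, rfl⟩
      exact ⟨_, _, (adj_iff _ _).2 ⟨e, rfl⟩, rfl⟩
  rw [rankAt, this]

lemma rankAt_le (p : ZMod 6 × Fin 3 → Fin 3 → ℝ) : rankAt (ringOfRoofs 6) p ≤ 48 := by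
  rw [rankAt_eq]
  exact (finrank_range_le_card (R := ℝ) (rows p)).trans_eq rfl

/-! ### Equilibrium equations of a stress -/

/-- Balance of forces at the first vertex of a hinge. -/
lemma balance_zero {p : ZMod 6 × Fin 3 → Fin 3 → ℝ} {g : ZMod 6 × Fin 8 → ℝ}
    (hg : ∑ e, g e • rows p e = 0) (k : ZMod 6) :
    g (k + 1, 0) • (p (k + 1, 0) - p (k + 1 + 1, 0))
      + g (k + 1, 1) • (p (k + 1, 0) - p (k + 1 + 1, 1))
      + g (k + 1, 4) • (p (k + 1, 0) - p (k + 1 + 1, 2))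
      + g (k, 0) • (p (k + 1, 0) - p (k, 0)) + g (k, 2) • (p (k + 1, 0) - p (k, 1))
      + g (k, 6) • (p (k + 1, 0) - p (k + 1, 2)) = 0 := by
  have h := congrFun hg (k + 1, 0)
  simp [Fintype.sum_prod_type_right, Fin.sum_univ_eight, rows, rigidityRow_apply, src, tgt,
    Finset.sum_add_distrib] at h
  rw [← h]
  abel

/-- Balance of forces at the second vertex of a hinge. -/
lemma balance_one {p : ZMod 6 × Fin 3 → Fin 3 → ℝ} {g : ZMod 6 × Fin 8 → ℝ}
    (hg : ∑ e, g e • rows p e = 0) (k : ZMod 6) :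
    g (k + 1, 2) • (p (k + 1, 1) - p (k + 1 + 1, 0))
      + g (k + 1, 3) • (p (k + 1, 1) - p (k + 1 + 1, 1))
      + g (k + 1, 5) • (p (k + 1, 1) - p (k + 1 + 1, 2))
      + g (k, 1) • (p (k + 1, 1) - p (k, 0)) + g (k, 3) • (p (k + 1, 1) - p (k, 1))
      + g (k, 7) • (p (k + 1, 1) - p (k + 1, 2)) = 0 := by
  have h := congrFun hg (k + 1, 1)
  simp [Fintype.sum_prod_type_right, Fin.sum_univ_eight, rows, rigidityRow_apply, src, tgt,
    Finset.sum_add_distrib] at h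
  rw [← h]
  abel

/-- Balance of forces at the apex of a roof. -/
lemma balance_apex {p : ZMod 6 × Fin 3 → Fin 3 → ℝ} {g : ZMod 6 × Fin 8 → ℝ}
    (hg : ∑ e, g e • rows p e = 0) (k : ZMod 6) :
    g (k, 4) • (p (k + 1, 2) - p (k, 0)) + g (k, 5) • (p (k + 1, 2) - p (k, 1))
      + g (k, 6) • (p (k + 1, 2) - p (k + 1, 0))
      + g (k, 7) • (p (k + 1, 2) - p (k + 1, 1)) = 0 := by
  have h := congrFun hg (k + 1, 2)
  simp [Fintype.sum_prod_type_right, Fin.sum_univ_eight, rows, rigidityRow_apply, src, tgt,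
    Finset.sum_add_distrib] at h
  rw [← h]

/-! ### The symmetric framework -/

/-- The positions of the three vertices `(0, 0)`, `(0, 1)`, `(0, 2)`. -/
def base : Fin 3 → Fin 3 → ℝ := ![![0, 0, 1], ![1, 0, 1], ![-1, -1, -1]]

/-- The framework whose vertex `(i, a)` is `Tⁱ (base a)`, where `T` negates a vector and shifts its
coordinates cyclically. As `T⁶ = 1`, it does not matter that the exponent is the representative of
`i` in `{0, …, 5}`. -/
def place (v : ZMod 6 × Fin 3) : Fin 3 → ℝ :=
  fun c => (-1) ^ v.1.val * base v.2 (c + Fin.ofNat 3 v.1.val)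

/-- The step `base ↦ T base`, valid also from the last index to the first because `T⁶ = 1`. -/
lemma place_succ (k : ZMod 6) (a c : Fin 3) : place (k + 1, a) c = -place (k, a) (c + 1) := by
  have h2 : ∀ k : ZMod 6, (k + 1).val % 2 = (k.val + 1) % 2 := by decide
  have h3 : ∀ (k : ZMod 6) (c : Fin 3),
      c + Fin.ofNat 3 (k + 1).val = c + 1 + Fin.ofNat 3 k.val := by decide
  have hs : (-1 : ℝ) ^ (k + 1).val = -(-1) ^ k.val := by
    rw [neg_one_pow_eq_pow_mod_two, h2, ← neg_one_pow_eq_pow_mod_two, pow_succ, mul_neg_one]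
  simp only [place]
  rw [h3, hs, neg_mul]

/-- Three consecutive groups of vertices, in the frame of the middle one: up to a common sign `s`
and a common shift `n` of coordinates, they are `T⁻¹ base`, `base` and `T base`. -/
lemma exists_frame (k : ZMod 6) : ∃ s : ℝ, s ≠ 0 ∧ ∃ n : Fin 3, ∀ a c,
    place (k, a) (c + n) = s * -base a (c + 2) ∧ place (k + 1, a) (c + n) = s * base a c ∧
      place (k + 1 + 1, a) (c + n) = s * -base a (c + 1) := by
  refine ⟨-(-1) ^ k.val, by simp, 2 - Fin.ofNat 3 k.val, fun a c => ?_⟩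
  have e0 : ∀ c m : Fin 3, c + (2 - m) + m = c + 2 := by decide
  have e1 : ∀ c m : Fin 3, c + (2 - m) + 1 + m = c := by decide
  have e2 : ∀ c m : Fin 3, c + (2 - m) + 1 + 1 + m = c + 1 := by decide
  simp only [place_succ]
  simp only [place, e0, e1, e2]
  refine ⟨?_, ?_, ?_⟩ <;> ring

/-- The only solution of the equilibrium equations, written in the frames of the hinges, is zero.
Here `x k j` is the coefficient of the edge `(k, j)`; `a`, `b` are the three coordinates of the
balance at the two vertices of the hinge `k + 1`, and `c` those at the apex of the roof `k`. -/
lemma eq_zero_of_equilibrium (x : ZMod 6 → Fin 8 → ℝ)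
    (a0 : ∀ k, -x (k + 1) 4 + x k 0 + x k 2 + x k 6 = 0)
    (a1 : ∀ k, x (k + 1) 0 + x (k + 1) 1 - x (k + 1) 4 + x k 2 + x k 6 = 0)
    (a2 : ∀ k, x (k + 1) 0 + 2 * x (k + 1) 1 + x k 0 + x k 2 + 2 * x k 6 = 0)
    (b0 : ∀ k, x (k + 1) 2 + x (k + 1) 3 + 2 * x k 1 + 2 * x k 3 + 2 * x k 7 = 0)
    (b1 : ∀ k, x (k + 1) 2 + x (k + 1) 3 - x (k + 1) 5 + x k 3 + x k 7 = 0)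
    (b2 : ∀ k, x (k + 1) 2 + 2 * x (k + 1) 3 + x k 1 + x k 3 + 2 * x k 7 = 0)
    (c0 : ∀ k, x k 6 + 2 * x k 7 = 0)
    (c1 : ∀ k, x k 4 + x k 6 + x k 7 = 0)
    (c2 : ∀ k, x k 4 + x k 5 + 2 * x k 6 + 2 * x k 7 = 0) (k : ZMod 6) (j : Fin 8) :
    x k j = 0 := by
  have cyc : ∀ k : ZMod 6, k + 1 + 1 + 1 + 1 + 1 + 1 = k := by decide
  -- The force `F` and the torque `M` exerted by the roof `k` on its first hinge, and the rule by
  -- which they rotate from one frame to the next. By the shape of `base`, `M_x = -F_y`.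
  obtain ⟨Fx, hFx⟩ : ∃ F : ZMod 6 → ℝ, ∀ k, F k = x k 2 + x k 3 - x k 4 := ⟨_, fun _ => rfl⟩
  obtain ⟨Fy, hFy⟩ : ∃ F : ZMod 6 → ℝ, ∀ k,
    F k = x k 0 + x k 1 - x k 4 + x k 2 + x k 3 - x k 5 := ⟨_, fun _ => rfl⟩
  obtain ⟨Fz, hFz⟩ : ∃ F : ZMod 6 → ℝ, ∀ k,
    F k = x k 0 + 2 * x k 1 + x k 2 + 2 * x k 3 := ⟨_, fun _ => rfl⟩
  obtain ⟨My, hMy⟩ : ∃ M : ZMod 6 → ℝ, ∀ k, M k = -x k 4 - x k 3 := ⟨_, fun _ => rfl⟩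
  obtain ⟨Mz, hMz⟩ : ∃ M : ZMod 6 → ℝ, ∀ k, M k = x k 2 + x k 3 - x k 5 := ⟨_, fun _ => rfl⟩
  have rFx : ∀ k, Fx (k + 1) = -Fz k := fun k => by
    rw [hFx, hFz]; linarith [a0 k, b0 k, c0 k, c1 k, c2 k]
  have rFy : ∀ k, Fy (k + 1) = -Fx k := fun k => by
    rw [hFy, hFx]; linarith [a1 k, b1 k, c0 k, c1 k, c2 k]
  have rFz : ∀ k, Fz (k + 1) = -Fy k := fun k => by
    rw [hFz, hFy]; linarith [a2 k, b2 k, c0 k, c1 k, c2 k]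
  have rMx : ∀ k, -Fy (k + 1) = Mz k := fun k => by
    rw [hFy, hMz]; linarith [a0 k, a1 k, a2 k, b0 k, b1 k, b2 k, c0 k, c1 k, c2 k]
  have rMy : ∀ k, My (k + 1) = -Fy k := fun k => by
    rw [hMy, hFy]; linarith [a0 k, a1 k, a2 k, b0 k, b1 k, b2 k, c0 k, c1 k, c2 k]
  have rMz : ∀ k, Mz (k + 1) = My k := fun k => by
    rw [hMz, hMy]; linarith [a0 k, a1 k, a2 k, b0 k, b1 k, b2 k, c0 k, c1 k, c2 k]
  -- After three steps `F_y` is negated while `M_x = -F_y` is preserved.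
  have Fy0 : ∀ k, Fy k = 0 := fun k => by
    linarith [rFy (k + 1 + 1), rFx (k + 1), rFz k, rMx (k + 1 + 1), rMz (k + 1), rMy k]
  have Fx0 : ∀ k, Fx k = 0 := fun k => by linarith [rFy k, Fy0 (k + 1)]
  have Fz0 : ∀ k, Fz k = 0 := fun k => by linarith [rFx k, Fx0 (k + 1)]
  have Mz0 : ∀ k, Mz k = 0 := fun k => by linarith [rMx k, Fy0 (k + 1)]
  have My0 : ∀ k, My k = 0 := fun k => by linarith [rMz k, Mz0 (k + 1)]
  -- The stress of the roof `k` is `x k 1` times a fixed vector.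
  have s0 : ∀ k, x k 0 = -2 * x k 1 := fun k => by
    linarith [hFx k, hFy k, hFz k, hMy k, hMz k, Fx0 k, Fy0 k, Fz0 k, My0 k, Mz0 k]
  have s2 : ∀ k, x k 2 = -2 * x k 1 := fun k => by
    linarith [hFx k, hFy k, hFz k, hMy k, hMz k, Fx0 k, Fy0 k, Fz0 k, My0 k, Mz0 k]
  have s3 : ∀ k, x k 3 = x k 1 := fun k => by
    linarith [hFx k, hFy k, hFz k, hMy k, hMz k, Fx0 k, Fy0 k, Fz0 k, My0 k, Mz0 k]
  have s4 : ∀ k, x k 4 = -x k 1 := fun k => by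
    linarith [hFx k, hFy k, hFz k, hMy k, hMz k, Fx0 k, Fy0 k, Fz0 k, My0 k, Mz0 k]
  have s5 : ∀ k, x k 5 = -x k 1 := fun k => by
    linarith [hFx k, hFy k, hFz k, hMy k, hMz k, Fx0 k, Fy0 k, Fz0 k, My0 k, Mz0 k]
  have s6 : ∀ k, x k 6 = 2 * x k 1 := fun k => by linarith [c0 k, c1 k, s4 k]
  have s7 : ∀ k, x k 7 = -x k 1 := fun k => by linarith [c0 k, c1 k, s4 k]
  have double : ∀ k, x (k + 1) 1 = 2 * x k 1 := fun k => by
    linarith [a0 k, s4 (k + 1), s0 k, s2 k, s6 k]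
  have s1 : ∀ k, x k 1 = 0 := fun k => by
    have h := double (k + 1 + 1 + 1 + 1 + 1)
    rw [cyc] at h
    linarith [double k, double (k + 1), double (k + 1 + 1), double (k + 1 + 1 + 1),
      double (k + 1 + 1 + 1 + 1)]
  fin_cases j <;> simp [s0, s1, s2, s3, s4, s5, s6, s7]

/-! ### Independence of the rows -/

lemma linearIndependent_rows : LinearIndependent ℝ (rows place) := by
  rw [Fintype.linearIndependent_iff]
  rintro g hg ⟨k, j⟩
  refine eq_zero_of_equilibrium (fun k j => g (k, j)) ?_ ?_ ?_ ?_ ?_ ?_ ?_ ?_ ?_ k j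
  -- Each equation is one coordinate, in the frame of the hinge `k + 1`, of the balance at a vertex.
  all_goals intro k; obtain ⟨s, hs, n, hf⟩ := exists_frame k; apply mul_left_cancel₀ hs
  · have h := congrFun (balance_zero hg k) (0 + n)
    simp only [Pi.add_apply, Pi.smul_apply, Pi.sub_apply, Pi.zero_apply, smul_eq_mul, hf] at h
    simp [base] at h
    linear_combination h
  · have h := congrFun (balance_zero hg k) (1 + n)
    simp only [Pi.add_apply, Pi.smul_apply, Pi.sub_apply, Pi.zero_apply, smul_eq_mul, hf] at h
    simp [base] at h
    linear_combination h
  · have h := congrFun (balance_zero hg k) (2 + n)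
    simp only [Pi.add_apply, Pi.smul_apply, Pi.sub_apply, Pi.zero_apply, smul_eq_mul, hf] at h
    simp [base] at h
    linear_combination h
  · have h := congrFun (balance_one hg k) (0 + n)
    simp only [Pi.add_apply, Pi.smul_apply, Pi.sub_apply, Pi.zero_apply, smul_eq_mul, hf] at h
    simp [base] at h
    linear_combination h
  · have h := congrFun (balance_one hg k) (1 + n)
    simp only [Pi.add_apply, Pi.smul_apply, Pi.sub_apply, Pi.zero_apply, smul_eq_mul, hf] at h
    simp [base] at h
    linear_combination h
  · have h := congrFun (balance_one hg k) (2 + n)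
    simp only [Pi.add_apply, Pi.smul_apply, Pi.sub_apply, Pi.zero_apply, smul_eq_mul, hf] at h
    simp [base] at h
    linear_combination h
  · have h := congrFun (balance_apex hg k) (0 + n)
    simp only [Pi.add_apply, Pi.smul_apply, Pi.sub_apply, Pi.zero_apply, smul_eq_mul, hf] at h
    simp [base] at h
    linear_combination -h
  · have h := congrFun (balance_apex hg k) (1 + n)
    simp only [Pi.add_apply, Pi.smul_apply, Pi.sub_apply, Pi.zero_apply, smul_eq_mul, hf] at h
    simp [base] at h
    linear_combination -h
  · have h := congrFun (balance_apex hg k) (2 + n)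
    simp only [Pi.add_apply, Pi.smul_apply, Pi.sub_apply, Pi.zero_apply, smul_eq_mul, hf] at h
    simp [base] at h
    linear_combination -h

lemma rankAt_place : rankAt (ringOfRoofs 6) place = 48 := by
  rw [rankAt_eq, finrank_span_eq_card linearIndependent_rows]
  rfl

end RingSix

theorem ringOfRoofs_six_isostatic :
    IsIndependent (ringOfRoofs 6) ∧
    genRank (ringOfRoofs 6) = 48 ∧
    (48 = 3 * Fintype.card (ZMod 6 × Fin 3) - 6) ∧
    genRank (ringOfRoofs 6) = 3 * Fintype.card (ZMod 6 × Fin 3) - 6 := by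
  have hrank : genRank (ringOfRoofs 6) = 48 := by
    apply le_antisymm
    · refine csSup_le ⟨_, 0, rfl⟩ ?_
      rintro n ⟨p, rfl⟩
      exact RingSix.rankAt_le p
    · refine le_csSup ⟨48, ?_⟩ ⟨RingSix.place, RingSix.rankAt_place.symm⟩
      rintro n ⟨p, rfl⟩
      exact RingSix.rankAt_le p
  refine ⟨hrank.trans RingSix.numEdges_eq.symm, hrank, ?_, hrank.trans ?_⟩ <;> rfl
end

section
/- Let (R_k, p) be a framework of a ring of k roofs with hinge non-edges {a₁,b₁},…,{a_k,b_k}, where roof B_i contains the hinges {a_{i−1},b_{i−1}} and {a_i,b_i} (indices mod k, so B₁ contains {a_k,b_k} and {a₁,b₁}). For a map w defined on the vertices of a roof, write D_i(w) = ⟨p(a_i) − p(b_i), w(a_i) − w(b_i)⟩. Suppose: for each i = 2,…,k, every infinitesimal flex w of the roof framework (B_i, p restricted to B_i) satisfies D_{i−1}(w) > 0 ↔ D_i(w) > 0 and D_{i−1}(w) < 0 ↔ D_i(w) < 0 (the 'pointed pseudo-triangular', expansive–expansive property); and every infinitesimal flex w of (B₁, p restricted to B₁) satisfies D_k(w) >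 0 ↔ D₁(w) < 0 and D_k(w) < 0 ↔ D₁(w) > 0 (the 'convex', expansive–contractive property). Then every infinitesimal flex u of the whole framework (R_k, p) satisfies D_i(u) = 0 for all i = 1,…,k; i.e., the hinge non-edge distances are preserved to first order by every infinitesimal flex. -/
/-! Each roof `B_i` is a subgraph of the ring, so a flex `u` of the ring restricts to a flex of
every roof (`roofSub_le_ringOfRoofs`, `IsInfFlex.anti`). The roofs `B_1, …, B_{k-1}` carry the sign
of `D_0(u)` unchanged along the ring to `D_{k-1}(u) = D_{-1}(u)`, while `B_0` reverses it. Hence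
`D_0(u)` has the same sign as its own negative, so it vanishes, and with it every `D_i(u)`. -/

open SimpleGraph

/-- Euclidean dot product on ℝ³. -/
def dot3 (x y : Fin 3 → ℝ) : ℝ := ∑ t, x t * y t

/-- An infinitesimal flex of the framework `(G, p)`. -/
def IsInfFlex {V : Type*} (G : SimpleGraph V) (p u : V → Fin 3 → ℝ) : Prop :=
  ∀ i j, G.Adj i j → dot3 (p i - p j) (u i - u j) = 0

/-- The roof `Bᵢ` of the ring of `k` roofs, as a (spanning) subgraph: it consists of
the eight edges of the roof on the vertices `aᵢ₋₁, bᵢ₋₁, aᵢ, bᵢ, cᵢ`. -/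
def roofSub (k : ℕ) (i : ZMod k) : SimpleGraph (ZMod k × Fin 3) :=
  SimpleGraph.fromRel (fun x y =>
    (x.1 = i - 1 ∧ x.2 ≠ 2 ∧ y.1 = i ∧ y.2 ≠ 2) ∨
    (x = (i, 2) ∧ y.2 ≠ 2 ∧ (y.1 = i ∨ y.1 = i - 1)))

/-- `D_i(w)` : the first-order rate of change of the hinge non-edge `{aᵢ,bᵢ}`
under the infinitesimal motion `w`, at the framework `p`. -/
def hingeD (k : ℕ) (p w : ZMod k × Fin 3 → Fin 3 → ℝ) (i : ZMod k) : ℝ :=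
  dot3 (p (i, 0) - p (i, 1)) (w (i, 0) - w (i, 1))

theorem IsInfFlex.anti {V : Type*} {G H : SimpleGraph V} (hGH : G ≤ H) {p u : V → Fin 3 → ℝ}
    (hu : IsInfFlex H p u) : IsInfFlex G p u :=
  fun i j hij => hu i j (hGH hij)

theorem roofSub_le_ringOfRoofs (k : ℕ) (i : ZMod k) : roofSub k i ≤ ringOfRoofs k := by
  have key : ∀ x y : ZMod k × Fin 3,
      ((x.1 = i - 1 ∧ x.2 ≠ 2 ∧ y.1 = i ∧ y.2 ≠ 2) ∨
        (x = (i, 2) ∧ y.2 ≠ 2 ∧ (y.1 = i ∨ y.1 = i - 1))) →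
      ((y.1 = x.1 + 1 ∧ x.2 ≠ 2 ∧ y.2 ≠ 2) ∨
        (x.2 = 2 ∧ y.2 ≠ 2 ∧ (y.1 = x.1 ∨ y.1 + 1 = x.1))) := by
    rintro x y (⟨hx, hx2, hy, hy2⟩ | ⟨rfl, hy2, hy | hy⟩)
    · exact Or.inl ⟨by rw [hx, hy]; ring, hx2, hy2⟩
    · exact Or.inr ⟨rfl, hy2, Or.inl hy⟩
    · exact Or.inr ⟨rfl, hy2, Or.inr (by rw [hy]; ring)⟩
  intro x y h
  simp only [roofSub, ringOfRoofs, SimpleGraph.fromRel_adj] at h ⊢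
  exact ⟨h.1, h.2.imp (key x y) (key y x)⟩

/-- Flex-sign lemma: if in the framework `(R_k, p)` every roof except the roof `B₀` is
"pointed pseudo-triangular" (expansive–expansive: any of its infinitesimal flexes moves
its two hinges with the same sign) and the roof `B₀` is "convex" (expansive–contractive:
any of its infinitesimal flexes moves its two hinges with opposite signs), then every
infinitesimal flex of the whole ring framework preserves all hinge non-edge lengths to
first order. -/
theorem flex_sign (k : ℕ) (hk : 3 ≤ k) (p : ZMod k × Fin 3 → Fin 3 → ℝ)
    (hpointed : ∀ i : ZMod k, i ≠ 0 → ∀ w, IsInfFlex (roofSub k i) p w →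
      ((0 < hingeD k p w (i - 1) ↔ 0 < hingeD k p w i) ∧
       (hingeD k p w (i - 1) < 0 ↔ hingeD k p w i < 0)))
    (hconvex : ∀ w, IsInfFlex (roofSub k 0) p w →
      ((0 < hingeD k p w (0 - 1) ↔ hingeD k p w 0 < 0) ∧
       (hingeD k p w (0 - 1) < 0 ↔ 0 < hingeD k p w 0)))
    (u : ZMod k × Fin 3 → Fin 3 → ℝ) (hu : IsInfFlex (ringOfRoofs k) p u) :
    ∀ i : ZMod k, hingeD k p u i = 0 := by
  have hroof : ∀ i, IsInfFlex (roofSub k i) p u := fun i => hu.anti (roofSub_le_ringOfRoofs k i)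
  have hsign : ∀ n : ℕ, n < k →
      ((0 < hingeD k p u 0 ↔ 0 < hingeD k p u n) ∧ (hingeD k p u 0 < 0 ↔ hingeD k p u n < 0)) := by
    intro n
    induction n with
    | zero => simp
    | succ n ih =>
      intro hn
      have hne : ((n + 1 : ℕ) : ZMod k) ≠ 0 := by
        rw [Ne, ZMod.natCast_eq_zero_iff]
        exact Nat.not_dvd_of_pos_of_lt n.succ_pos hn
      have hstep := hpointed _ hne u (hroof _)
      have hpred : ((n + 1 : ℕ) : ZMod k) - 1 = n := by push_cast; ring
      rw [hpred] at hstep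
      have hn' := ih (by omega)
      exact ⟨hn'.1.trans hstep.1, hn'.2.trans hstep.2⟩
  have hlast : ((k - 1 : ℕ) : ZMod k) = 0 - 1 := by
    rw [Nat.cast_sub (by omega)]; simp
  have hk1 := hsign (k - 1) (by omega)
  rw [hlast] at hk1
  have hc := hconvex u (hroof 0)
  have hpos : ¬ 0 < hingeD k p u 0 := fun h => lt_asymm h (hc.1.mp (hk1.1.mp h))
  have hneg : ¬ hingeD k p u 0 < 0 := fun h => lt_asymm h (hc.2.mp (hk1.2.mp h))
  intro i
  have : NeZero k := ⟨by omega⟩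
  have hi := hsign i.val i.val_lt
  rw [ZMod.natCast_zmod_val] at hi
  exact le_antisymm (not_lt.mp fun h => hpos (hi.1.mpr h)) (not_lt.mp fun h => hneg (hi.2.mpr h))
end
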